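/- Let ρ > 0 and m ∈ (−√ρ, √ρ), fix a coordinate x, and let P_x(φ) := φ_x. Let f : ℝ → ℝ be Borel measurable with ∫_ℝ |f(t)| e^{−a t²} dt < ∞ for every a > 0. Then the single-coordinate expectations under the auxiliary microcanonical ensembles converge: lim_{N→∞} ∫ f(P_x(φ)) dμ_MC^{m,ρ;N}(φ) = (2π(ρ − m²))^{−1/2} ∫_ℝ f(t) e^{−(t−m)²/(2(ρ−m²))} dt. In particular, the sequence ∫ f∘P_x dμ_MC^{m,ρ;N} is bounded uniformly in N, i.e., it is O(1). -/

import Mathlib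

open MeasureTheory ProbabilityTheory Matrix

/-- The specific `p`-norm fluctuation distance `w_p(μ₁, μ₂; N)`:
the infimum over all couplings `γ` of `μ₁` and `μ₂` of
`∫ (1/N) ∑ᵢ |xᵢ - yᵢ|^p dγ`, raised to the power `1/p`. -/
noncomputable def fluctDist (p : ℝ) (N : ℕ) (μ₁ μ₂ : Measure (Fin N → ℝ)) : ℝ :=
  sInf {c : ℝ | ∃ γ : Measure ((Fin N → ℝ) × (Fin N → ℝ)), IsProbabilityMeasure γ ∧
      γ.map Prod.fst = μ₁ ∧ γ.map Prod.snd = μ₂ ∧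
      c = ∫ xy, (N : ℝ)⁻¹ * ∑ i, |xy.1 i - xy.2 i| ^ p ∂γ} ^ (1 / p)

/-- The standard Gaussian measure on `ℝ^N`. -/
noncomputable def stdGaussian (N : ℕ) : Measure (Fin N → ℝ) :=
  Measure.pi fun _ => gaussianReal 0 1

/-- `U` is an orthogonal matrix such that the first coordinate of `U x` is
`N^{-1/2} ∑ᵢ xᵢ`. -/
def GoodRotation {N : ℕ} (hN : 0 < N) (U : Matrix (Fin N) (Fin N) ℝ) : Prop :=
  Uᵀ * U = 1 ∧ ∀ x : Fin N → ℝ, U.mulVec x ⟨0, hN⟩ = (∑ i, x i) / Real.sqrt N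

/-- The auxiliary microcanonical ensemble `μ_MC^{m,ρ;N}` with magnetization density `m` and
particle density `ρ`: the pushforward under `U⁻¹` of the product of the Dirac mass at `m √N`
in the first coordinate with the uniform probability measure on the sphere of radius
`√(N(ρ − m²))` in the remaining `N − 1` coordinates.  The uniform sphere measure is realized
as the pushforward of the standard Gaussian on the remaining coordinates under radial
normalization. -/
noncomputable def mcSpherical {N : ℕ} (hN : 0 < N) (U : Matrix (Fin N) (Fin N) ℝ)
    (m ρ : ℝ) : Measure (Fin N → ℝ) :=
  (stdGaussian N).map fun x =>
    U⁻¹.mulVec fun i =>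
      if i = ⟨0, hN⟩ then m * Real.sqrt N
      else Real.sqrt (N * (ρ - m ^ 2)) * x i /
        Real.sqrt (∑ j ∈ Finset.univ.filter (fun j => j ≠ (⟨0, hN⟩ : Fin N)), x j ^ 2)

/-!
Removing the first entry of the column `U (·, i)` leaves a vector of norm `√((N - 1) / N)`, so the
coordinate `φ_i` is `m + √((N - 1) (ρ - m²))` times one coordinate of a uniform point of the unit
sphere of `ℝ ^ (N - 1)`, that is, times `⟪e, X⟫ / ‖X‖` for a unit vector `e` and a standard Gaussian
`X`. Splitting `X = s e + y` with `y ⟂ e`, the ratio `s / ‖y‖` has a density proportional to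
`(1 + s²) ^ (-d / 2)` in dimension `d`, and `t = s / √(1 + s²)` turns this into
`(1 - t²) ^ ((d - 3) / 2)`.

The normalising constants need not be computed: the expectation of `f` is a quotient of two
integrals against the same weight, and both converge by dominated convergence, since the weight at
`t / √d` tends to `exp (-t² / 2)` and is at most `exp (-(d - 3) t² / (2 d))`.
-/

open Filter Module
open scoped ENNReal RealInnerProductSpace Topology

section AddHaar

variable {E : Type*} [NormedAddCommGroup E] [NormedSpace ℝ E] [FiniteDimensional ℝ E]
  [MeasurableSpace E] [BorelSpace E] (μ : Measure E) [μ.IsAddHaarMeasure]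

lemma lintegral_comp_smul_addHaar (f : E → ℝ≥0∞) {r : ℝ} (hr : 0 < r) :
    ENNReal.ofReal (r ^ finrank ℝ E) * ∫⁻ x, f (r • x) ∂μ = ∫⁻ x, f x ∂μ := by
  have hmap := lintegral_map_equiv (μ := μ) f (Homeomorph.smulOfNeZero r hr.ne').toMeasurableEquiv
  simp only [Homeomorph.toMeasurableEquiv_coe, Homeomorph.smulOfNeZero_apply,
    Measure.map_addHaar_smul μ hr.ne', lintegral_smul_measure, smul_eq_mul] at hmap
  rw [← hmap, ← mul_assoc, ← ENNReal.ofReal_mul (by positivity), abs_of_pos (by positivity),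
    mul_inv_cancel₀ (by positivity), ENNReal.ofReal_one, one_mul]

lemma lintegral_norm_mul_exp_neg_mul_sq_norm {a : ℝ} (ha : 0 < a) :
    ∫⁻ y, ENNReal.ofReal (‖y‖ * Real.exp (-(a * ‖y‖ ^ 2) / 2)) ∂μ =
      ENNReal.ofReal (a ^ (-((finrank ℝ E + 1 : ℝ) / 2))) *
        ∫⁻ y, ENNReal.ofReal (‖y‖ * Real.exp (-‖y‖ ^ 2 / 2)) ∂μ := by
  have hpow : a ^ (-((finrank ℝ E + 1 : ℝ) / 2)) * √a ^ finrank ℝ E * √a = 1 := by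
    rw [mul_assoc, ← pow_succ, ← Real.rpow_natCast (√a), Real.sqrt_eq_rpow, ← Real.rpow_mul ha.le,
      ← Real.rpow_add ha]
    push_cast
    rw [show -((finrank ℝ E + 1 : ℝ) / 2) + 1 / 2 * (finrank ℝ E + 1) = 0 by ring, Real.rpow_zero]
  have hscale (y : E) : ENNReal.ofReal (‖√a • y‖ * Real.exp (-‖√a • y‖ ^ 2 / 2)) =
      ENNReal.ofReal √a * ENNReal.ofReal (‖y‖ * Real.exp (-(a * ‖y‖ ^ 2) / 2)) := by
    rw [← ENNReal.ofReal_mul (Real.sqrt_nonneg a), norm_smul, Real.norm_of_nonneg (by positivity),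
      mul_pow, Real.sq_sqrt ha.le, mul_assoc]
  rw [← lintegral_comp_smul_addHaar μ (fun y => ENNReal.ofReal (‖y‖ * Real.exp (-‖y‖ ^ 2 / 2)))
    (Real.sqrt_pos.2 ha)]
  simp_rw [hscale]
  rw [lintegral_const_mul _ (by fun_prop), ← mul_assoc, ← mul_assoc,
    ← ENNReal.ofReal_mul (by positivity), ← ENNReal.ofReal_mul (by positivity), hpow,
    ENNReal.ofReal_one, one_mul]

/- With `x = s ‖y‖` the exponent `(x² + ‖y‖²) / 2` becomes `(1 + s²) ‖y‖² / 2`, and the integral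
over `y` scales. -/
lemma lintegral_lintegral_div_norm_mul_exp [Nontrivial E] {h : ℝ → ℝ≥0∞} (hh : Measurable h) :
    ∫⁻ y, (∫⁻ x : ℝ, h (x / ‖y‖) * ENNReal.ofReal (Real.exp (-(x ^ 2 + ‖y‖ ^ 2) / 2))) ∂μ =
      (∫⁻ y, ENNReal.ofReal (‖y‖ * Real.exp (-‖y‖ ^ 2 / 2)) ∂μ) *
        ∫⁻ s : ℝ, h s * ENNReal.ofReal ((1 + s ^ 2) ^ (-((finrank ℝ E + 1 : ℝ) / 2))) := by
  have hne : ∀ᵐ y ∂μ, y ≠ 0 := Measure.ae_ne μ 0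
  have hsubst : ∀ᵐ y ∂μ,
      ∫⁻ x : ℝ, h (x / ‖y‖) * ENNReal.ofReal (Real.exp (-(x ^ 2 + ‖y‖ ^ 2) / 2)) =
        ∫⁻ s : ℝ, h s * ENNReal.ofReal (‖y‖ * Real.exp (-((1 + s ^ 2) * ‖y‖ ^ 2) / 2)) := by
    filter_upwards [hne] with y hy
    have hy' : 0 < ‖y‖ := norm_pos_iff.2 hy
    rw [← lintegral_comp_smul_addHaar (volume : Measure ℝ) _ hy', finrank_self, pow_one,
      ← lintegral_const_mul _ (by fun_prop)]
    refine lintegral_congr fun s => ?_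
    rw [smul_eq_mul, mul_div_cancel_left₀ s hy'.ne', mul_left_comm,
      ← ENNReal.ofReal_mul (norm_nonneg y)]
    ring_nf
  rw [lintegral_congr_ae hsubst, lintegral_lintegral_swap (by fun_prop),
    ← lintegral_const_mul _ (by fun_prop)]
  refine lintegral_congr fun s => ?_
  rw [lintegral_const_mul _ (by fun_prop),
    lintegral_norm_mul_exp_neg_mul_sq_norm μ (by positivity : 0 < 1 + s ^ 2)]
  ring

end AddHaar

section InnerProductSpace

variable {E : Type*} [NormedAddCommGroup E] [InnerProductSpace ℝ E] [FiniteDimensional ℝ E]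
  [MeasurableSpace E] [BorelSpace E]

lemma stdGaussian_eq_smul_withDensity :
    ProbabilityTheory.stdGaussian E = ENNReal.ofReal ((2 * Real.pi) ^ (-(finrank ℝ E / 2 : ℝ))) •
      volume.withDensity fun x => ENNReal.ofReal (Real.exp (-‖x‖ ^ 2 / 2)) := by
  set c : ℝ := (2 * Real.pi) ^ (-(finrank ℝ E / 2 : ℝ)) with hc
  have hint : Integrable fun x : E => Real.exp (-‖x‖ ^ 2 / 2) := by
    refine not_imp_comm.1 integral_undef ?_
    simp_rw [neg_div, div_eq_inv_mul, ← neg_mul]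
    rw [GaussianFourier.integral_rexp_neg_mul_sq_norm (by norm_num)]
    positivity
  have := isFiniteMeasure_withDensity_ofReal hint.2
  have : IsFiniteMeasure (ENNReal.ofReal c • volume.withDensity fun x : E =>
      ENNReal.ofReal (Real.exp (-‖x‖ ^ 2 / 2))) := Measure.smul_finite _ ENNReal.ofReal_ne_top
  refine Measure.ext_of_charFun (funext fun t => ?_)
  have hfourier := GaussianFourier.integral_cexp_neg_mul_sq_norm_add (V := E) (b := 1 / 2)
    (by norm_num) Complex.I t
  have hconst : (c : ℂ) * (Real.pi / (1 / 2 : ℂ)) ^ (finrank ℝ E / 2 : ℂ) = 1 := by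
    rw [show (Real.pi / (1 / 2 : ℂ)) = ((2 * Real.pi : ℝ) : ℂ) by push_cast; ring,
      show (finrank ℝ E / 2 : ℂ) = ((finrank ℝ E / 2 : ℝ) : ℂ) by push_cast; ring,
      ← Complex.ofReal_cpow (by positivity), ← Complex.ofReal_mul, hc,
      ← Real.rpow_add (by positivity), neg_add_cancel, Real.rpow_zero, Complex.ofReal_one]
  have hintegrand (x : E) : (ENNReal.ofReal (Real.exp (-‖x‖ ^ 2 / 2))).toReal •
      Complex.exp (⟪x, t⟫ * Complex.I) =
      Complex.exp (-(1 / 2) * ‖x‖ ^ 2 + Complex.I * ⟪t, x⟫) := by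
    rw [ENNReal.toReal_ofReal (Real.exp_nonneg _), Complex.real_smul, Complex.ofReal_exp,
      ← Complex.exp_add, real_inner_comm]
    push_cast
    ring_nf
  rw [charFun_stdGaussian, charFun_apply, integral_smul_measure,
    integral_withDensity_eq_integral_toReal_smul (by fun_prop) (by simp),
    integral_congr_ae (ae_of_all _ hintegrand), hfourier,
    ENNReal.toReal_ofReal (by positivity), Complex.real_smul, ← mul_assoc, hconst, one_mul,
    Complex.I_sq]
  ring_nf

lemma lintegral_eq_lintegral_orthogonal_span_singleton {e : E} (he : ‖e‖ = 1) {f : E → ℝ≥0∞}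
    (hf : Measurable f) : ∫⁻ x, f x = ∫⁻ y : (ℝ ∙ e)ᗮ, ∫⁻ s : ℝ, f (s • e + y) := by
  have hφ : MeasurePreserving fun p : ℝ × (ℝ ∙ e)ᗮ => p.1 • e + (p.2 : E) := by
    have hspan : MeasurePreserving (LinearIsometryEquiv.toSpanUnitSingleton (𝕜 := ℝ) e he) :=
      LinearIsometryEquiv.measurePreserving _
    exact ((ℝ ∙ e).orthogonalDecomposition.symm.measurePreserving.comp
      (WithLp.volume_preserving_toLp _ _)).comp (hspan.prod (MeasurePreserving.id volume))
  rw [← hφ.lintegral_comp hf]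
  exact lintegral_prod_symm' _ (hf.comp hφ.measurable)

end InnerProductSpace
section SphereWeight

/-- The unnormalised density of one coordinate of a uniform point of the unit sphere of `ℝ ^ d`.
The dimension is a real parameter, so that it can be sent to infinity along any sequence. -/
noncomputable def sphereWeight (d t : ℝ) : ℝ :=
  if t ^ 2 < 1 then (1 - t ^ 2) ^ ((d - 3) / 2) else 0

variable {d t : ℝ}

lemma sphereWeight_of_sq_lt_one (ht : t ^ 2 < 1) :
    sphereWeight d t = (1 - t ^ 2) ^ ((d - 3) / 2) :=
  if_pos ht

lemma sphereWeight_of_one_le_sq (ht : 1 ≤ t ^ 2) : sphereWeight d t = 0 :=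
  if_neg ht.not_gt

lemma sphereWeight_nonneg (d t : ℝ) : 0 ≤ sphereWeight d t := by
  rcases lt_or_ge (t ^ 2) 1 with ht | ht
  · rw [sphereWeight_of_sq_lt_one ht]
    exact Real.rpow_nonneg (sub_nonneg.2 ht.le) _
  · rw [sphereWeight_of_one_le_sq ht]

@[fun_prop]
lemma measurable_sphereWeight (d : ℝ) : Measurable (sphereWeight d) :=
  Measurable.ite (measurableSet_lt (by fun_prop) measurable_const) (by fun_prop) measurable_const

lemma sphereWeight_le_exp (hd : 3 ≤ d) (t : ℝ) :
    sphereWeight d t ≤ Real.exp (-((d - 3) / 2 * t ^ 2)) := by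
  rcases lt_or_ge (t ^ 2) 1 with ht | ht
  · rw [sphereWeight_of_sq_lt_one ht]
    calc (1 - t ^ 2) ^ ((d - 3) / 2) ≤ Real.exp (-t ^ 2) ^ ((d - 3) / 2) := by
          refine Real.rpow_le_rpow (sub_nonneg.2 ht.le) ?_ (by linarith)
          linarith [Real.add_one_le_exp (-t ^ 2)]
      _ = Real.exp (-((d - 3) / 2 * t ^ 2)) := by
          rw [← Real.exp_mul]
          ring_nf
  · rw [sphereWeight_of_one_le_sq ht]
    positivity

lemma hasDerivAt_div_sqrt_one_add_sq (s : ℝ) :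
    HasDerivAt (fun s : ℝ => s / √(1 + s ^ 2)) ((1 + s ^ 2) ^ (-(3 / 2) : ℝ)) s := by
  have hpos : 0 < 1 + s ^ 2 := by positivity
  have hsqrt : HasDerivAt (fun s : ℝ => √(1 + s ^ 2)) (s / √(1 + s ^ 2)) s := by
    convert ((hasDerivAt_pow 2 s).const_add 1).sqrt hpos.ne' using 1
    field_simp
    ring
  refine ((hasDerivAt_id' s).div hsqrt (Real.sqrt_pos.2 hpos).ne').congr_deriv ?_
  have hcube : (1 + s ^ 2) ^ (-(3 / 2) : ℝ) = (√(1 + s ^ 2) ^ 3)⁻¹ := by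
    rw [Real.sqrt_eq_rpow, ← Real.rpow_mul_natCast hpos.le, ← Real.rpow_neg hpos.le]
    norm_num
  rw [hcube]
  field_simp
  rw [Real.sq_sqrt hpos.le]
  ring

lemma injective_div_sqrt_one_add_sq : Function.Injective fun s : ℝ => s / √(1 + s ^ 2) := by
  refine (strictMono_of_hasDerivAt_pos hasDerivAt_div_sqrt_one_add_sq fun s => ?_).injective
  positivity

lemma mem_range_div_sqrt_one_add_sq (ht : t ^ 2 < 1) :
    t ∈ Set.range fun s : ℝ => s / √(1 + s ^ 2) := by
  have hpos : 0 < 1 - t ^ 2 := sub_pos.2 ht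
  have hinv : 1 + (t / √(1 - t ^ 2)) ^ 2 = (1 - t ^ 2)⁻¹ := by
    rw [div_pow, Real.sq_sqrt hpos.le]
    field_simp
    ring
  refine ⟨t / √(1 - t ^ 2), ?_⟩
  simp only [hinv, Real.sqrt_inv, div_inv_eq_mul]
  exact div_mul_cancel₀ t (Real.sqrt_pos.2 hpos).ne'

lemma sphereWeight_div_sqrt_one_add_sq (d s : ℝ) :
    (1 + s ^ 2) ^ (-(3 / 2) : ℝ) * sphereWeight d (s / √(1 + s ^ 2)) =
      (1 + s ^ 2) ^ (-(d / 2)) := by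
  have hpos : 0 < 1 + s ^ 2 := by positivity
  have hsub : 1 - (s / √(1 + s ^ 2)) ^ 2 = (1 + s ^ 2)⁻¹ := by
    rw [div_pow, Real.sq_sqrt hpos.le]
    field_simp
    ring
  rw [sphereWeight_of_sq_lt_one (sub_pos.1 (hsub ▸ inv_pos.2 hpos)), hsub,
    Real.inv_rpow hpos.le, ← Real.rpow_neg hpos.le, ← Real.rpow_add hpos]
  ring_nf

lemma lintegral_mul_sphereWeight (d : ℝ) (h : ℝ → ℝ≥0∞) :
    ∫⁻ t, h t * ENNReal.ofReal (sphereWeight d t) =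
      ∫⁻ s : ℝ, h (s / √(1 + s ^ 2)) * ENNReal.ofReal ((1 + s ^ 2) ^ (-(d / 2))) := by
  have hsupp : Function.support (fun t => h t * ENNReal.ofReal (sphereWeight d t)) ⊆
      Set.range fun s : ℝ => s / √(1 + s ^ 2) := fun t ht =>
    mem_range_div_sqrt_one_add_sq <| lt_of_not_ge fun hle => ht <| by
      simp [sphereWeight_of_one_le_sq hle]
  rw [← setLIntegral_eq_of_support_subset hsupp, ← Set.image_univ,
    lintegral_image_eq_lintegral_abs_deriv_mul MeasurableSet.univ
      (fun s _ => (hasDerivAt_div_sqrt_one_add_sq s).hasDerivWithinAt)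
      injective_div_sqrt_one_add_sq.injOn, setLIntegral_univ]
  refine lintegral_congr fun s => ?_
  rw [mul_left_comm, ← ENNReal.ofReal_mul (by positivity), abs_of_nonneg (by positivity),
    sphereWeight_div_sqrt_one_add_sq]

end SphereWeight

section GaussianDirection

variable {E : Type*} [NormedAddCommGroup E] [InnerProductSpace ℝ E]

lemma norm_smul_add_sq_of_mem_orthogonal_span {e y : E} (he : ‖e‖ = 1) (hy : y ∈ (ℝ ∙ e)ᗮ)
    (s : ℝ) : ‖s • e + y‖ ^ 2 = s ^ 2 + ‖y‖ ^ 2 := by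
  have horth : ⟪s • e, y⟫ = 0 := by
    rw [real_inner_smul_left, Submodule.mem_orthogonal_singleton_iff_inner_right.1 hy, mul_zero]
  rw [norm_add_sq_real, horth, norm_smul, he, mul_one, Real.norm_eq_abs, sq_abs, mul_zero, add_zero]

lemma inner_smul_add_div_norm_of_mem_orthogonal_span {e y : E} (he : ‖e‖ = 1)
    (hy : y ∈ (ℝ ∙ e)ᗮ) (hy0 : y ≠ 0) (s : ℝ) :
    ⟪e, s • e + y⟫ / ‖s • e + y‖ = s / ‖y‖ / √(1 + (s / ‖y‖) ^ 2) := by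
  have hy' : 0 < ‖y‖ := norm_pos_iff.2 hy0
  have hinner : ⟪e, s • e + y⟫ = s := by
    rw [inner_add_right, real_inner_smul_right, real_inner_self_eq_norm_sq, he,
      Submodule.mem_orthogonal_singleton_iff_inner_right.1 hy, one_pow, mul_one, add_zero]
  have hnorm : ‖s • e + y‖ = ‖y‖ * √(1 + (s / ‖y‖) ^ 2) := by
    rw [← Real.sqrt_sq (norm_nonneg (s • e + y)), norm_smul_add_sq_of_mem_orthogonal_span he hy,
      ← Real.sqrt_sq hy'.le, ← Real.sqrt_mul (by positivity), Real.sqrt_sq hy'.le]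
    congr 1
    field_simp
    ring
  rw [hinner, hnorm, div_div]

variable [FiniteDimensional ℝ E] [MeasurableSpace E] [BorelSpace E]

lemma lintegral_inner_div_norm_mul_exp {e : E} (he : ‖e‖ = 1) (hdim : 2 ≤ finrank ℝ E)
    {h : ℝ → ℝ≥0∞} (hh : Measurable h) :
    ∫⁻ x : E, h (⟪e, x⟫ / ‖x‖) * ENNReal.ofReal (Real.exp (-‖x‖ ^ 2 / 2)) =
      (∫⁻ y : (ℝ ∙ e)ᗮ, ENNReal.ofReal (‖y‖ * Real.exp (-‖y‖ ^ 2 / 2))) *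
        ∫⁻ t, h t * ENNReal.ofReal (sphereWeight (finrank ℝ E) t) := by
  have hcompl : finrank ℝ (ℝ ∙ e)ᗮ + 1 = finrank ℝ E := by
    rw [← (ℝ ∙ e).finrank_add_finrank_orthogonal,
      finrank_span_singleton (norm_ne_zero_iff.1 (by simp [he])), add_comm]
  have : Nontrivial (ℝ ∙ e)ᗮ := nontrivial_of_finrank_pos (R := ℝ) (by lia)
  have hslice : ∀ᵐ y : (ℝ ∙ e)ᗮ, ∫⁻ s : ℝ, h (⟪e, s • e + y⟫ / ‖s • e + y‖) *
      ENNReal.ofReal (Real.exp (-‖s • e + y‖ ^ 2 / 2)) =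
      ∫⁻ s : ℝ, h (s / ‖y‖ / √(1 + (s / ‖y‖) ^ 2)) *
        ENNReal.ofReal (Real.exp (-(s ^ 2 + ‖y‖ ^ 2) / 2)) := by
    filter_upwards [Measure.ae_ne volume 0] with y hy
    refine lintegral_congr fun s => ?_
    rw [norm_smul_add_sq_of_mem_orthogonal_span he y.2,
      inner_smul_add_div_norm_of_mem_orthogonal_span he y.2 (by simpa using hy),
      Submodule.norm_coe]
  rw [lintegral_eq_lintegral_orthogonal_span_singleton he (by fun_prop),
    lintegral_congr_ae hslice,
    lintegral_lintegral_div_norm_mul_exp volume (h := fun u => h (u / √(1 + u ^ 2)))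
      (by fun_prop), lintegral_mul_sphereWeight, ← hcompl]
  push_cast
  rfl

lemma exists_map_inner_div_norm_stdGaussian {e : E} (he : ‖e‖ = 1) (hdim : 2 ≤ finrank ℝ E) :
    ∃ c : ℝ≥0∞, (ProbabilityTheory.stdGaussian E).map (fun x => ⟪e, x⟫ / ‖x‖) =
      c • volume.withDensity fun t => ENNReal.ofReal (sphereWeight (finrank ℝ E) t) := by
  refine ⟨ENNReal.ofReal ((2 * Real.pi) ^ (-(finrank ℝ E / 2 : ℝ))) *
    ∫⁻ y : (ℝ ∙ e)ᗮ, ENNReal.ofReal (‖y‖ * Real.exp (-‖y‖ ^ 2 / 2)),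
    Measure.ext_of_lintegral _ fun h hh => ?_⟩
  rw [lintegral_map hh (by fun_prop), stdGaussian_eq_smul_withDensity, lintegral_smul_measure,
    lintegral_smul_measure, lintegral_withDensity_eq_lintegral_mul _ (by fun_prop) (by fun_prop),
    lintegral_withDensity_eq_lintegral_mul _ (by fun_prop) hh, smul_eq_mul, smul_eq_mul, mul_assoc,
    mul_comm (fun x : E => _), mul_comm (fun t : ℝ => _)]
  exact congrArg _ (lintegral_inner_div_norm_mul_exp he hdim hh)

end GaussianDirection

section WithDensity

variable {α F : Type*} [MeasurableSpace α] [NormedAddCommGroup F] [NormedSpace ℝ F]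
  {μ ν : Measure α} {w : α → ℝ} {c : ℝ≥0∞}

lemma integral_smul_withDensity_ofReal (hw : Measurable w) (hw0 : ∀ x, 0 ≤ w x) (f : α → F) :
    ∫ x, f x ∂(c • μ.withDensity fun x => ENNReal.ofReal (w x)) =
      c.toReal • ∫ x, w x • f x ∂μ := by
  rw [integral_smul_measure,
    integral_withDensity_eq_integral_toReal_smul (by fun_prop) (by simp)]
  simp only [ENNReal.toReal_ofReal (hw0 _)]

lemma integral_eq_inv_smul_of_eq_smul_withDensity [IsProbabilityMeasure ν] (hw : Measurable w)
    (hw0 : ∀ x, 0 ≤ w x) (hν : ν = c • μ.withDensity fun x => ENNReal.ofReal (w x)) (f : α → F) :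
    ∫ x, f x ∂ν = (∫ x, w x ∂μ)⁻¹ • ∫ x, w x • f x ∂μ := by
  have hone : c.toReal * ∫ x, w x ∂μ = 1 := by
    have hint := integral_smul_withDensity_ofReal (μ := μ) (c := c) hw hw0 fun _ => (1 : ℝ)
    simpa [← hν] using hint.symm
  rw [hν, integral_smul_withDensity_ofReal hw hw0, eq_inv_of_mul_eq_one_left hone]

end WithDensity

lemma map_const_add_mul_withDensity {g : ℝ → ℝ≥0∞} (hg : Measurable g) (m : ℝ) {r : ℝ}
    (hr : 0 < r) :
    (volume.withDensity g).map (fun t => m + r * t) =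
      ENNReal.ofReal r⁻¹ • volume.withDensity fun t => g ((t - m) / r) := by
  refine Measure.ext_of_lintegral _ fun h hh => ?_
  have hscale := lintegral_comp_smul_addHaar (volume : Measure ℝ)
    (fun t => g (t / r) * h (m + t)) hr
  have hshift := lintegral_sub_right_eq_self (μ := volume) (fun t => g (t / r) * h (m + t)) m
  simp only [smul_eq_mul, mul_div_cancel_left₀ _ hr.ne', finrank_self, pow_one] at hscale
  simp only [add_sub_cancel] at hshift
  rw [lintegral_map hh (by fun_prop), lintegral_withDensity_eq_lintegral_mul _ hg (by fun_prop),
    lintegral_smul_measure, lintegral_withDensity_eq_lintegral_mul _ (by fun_prop) hh]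
  simp only [Pi.mul_apply, smul_eq_mul]
  rw [hshift, ← hscale, ← mul_assoc, ← ENNReal.ofReal_mul (by positivity),
    inv_mul_cancel₀ hr.ne', ENNReal.ofReal_one, one_mul]

section McSpherical

variable {n : ℕ} {U : Matrix (Fin (n + 1)) (Fin (n + 1)) ℝ}

lemma GoodRotation.apply_zero (hU : GoodRotation (Nat.succ_pos n) U) (i : Fin (n + 1)) :
    U 0 i = (√(n + 1 : ℕ))⁻¹ := by
  simpa using hU.2 (Pi.single i 1)

lemma GoodRotation.sum_apply_succ_sq (hU : GoodRotation (Nat.succ_pos n) U) (i : Fin (n + 1)) :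
    ∑ j : Fin n, U j.succ i ^ 2 = n / (n + 1 : ℕ) := by
  have hcol : ∑ j, U j i ^ 2 = 1 := by
    simpa [Matrix.mul_apply, sq] using congrFun₂ hU.1 i i
  rw [Fin.sum_univ_succ, hU.apply_zero, inv_pow, Real.sq_sqrt (by positivity)] at hcol
  rw [eq_sub_of_add_eq' hcol]
  push_cast
  field_simp
  ring

lemma measurePreserving_fin_tail_stdGaussian (n : ℕ) :
    MeasurePreserving (fun (x : Fin (n + 1) → ℝ) (j : Fin n) => x j.succ)
      (_root_.stdGaussian (n + 1)) (_root_.stdGaussian n) :=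
  measurePreserving_snd.comp
    (measurePreserving_piFinSuccAbove (fun _ : Fin (n + 1) => gaussianReal 0 1) 0)

lemma map_apply_mcSpherical (hU : GoodRotation (Nat.succ_pos n) U) (i : Fin (n + 1)) (m ρ : ℝ) :
    (mcSpherical (Nat.succ_pos n) U m ρ).map (fun φ => φ i) =
      (ProbabilityTheory.stdGaussian (EuclideanSpace ℝ (Fin n))).map fun y =>
        m + √((n + 1 : ℕ) * (ρ - m ^ 2)) *
          (⟪WithLp.toLp 2 fun j : Fin n => U j.succ i, y⟫ / ‖y‖) := by
  have hmeas : Measurable fun x : Fin (n + 1) → ℝ => U⁻¹.mulVec fun i =>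
      if i = ⟨0, Nat.succ_pos n⟩ then m * √(n + 1 : ℕ)
      else √((n + 1 : ℕ) * (ρ - m ^ 2)) * x i /
        √(∑ j ∈ Finset.univ.filter (fun j => j ≠ ⟨0, Nat.succ_pos n⟩), x j ^ 2) := by
    refine (Continuous.matrix_mulVec continuous_const continuous_id).measurable.comp
      (measurable_pi_lambda _ fun i => ?_)
    exact Measurable.ite (MeasurableSet.const _) (by fun_prop) (by fun_prop)
  rw [← map_pi_eq_stdGaussian, ← _root_.stdGaussian,
    ← (measurePreserving_fin_tail_stdGaussian n).map_eq, Measure.map_map (by fun_prop)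
    (by fun_prop), Measure.map_map (by fun_prop) (by fun_prop), mcSpherical,
    Measure.map_map (by fun_prop) hmeas, Matrix.inv_eq_left_inv hU.1]
  congr 1
  funext x
  have hnorm : √(∑ j ∈ Finset.univ.filter (fun j => j ≠ ⟨0, Nat.succ_pos n⟩), x j ^ 2) =
      ‖WithLp.toLp 2 fun j : Fin n => x j.succ‖ := by
    rw [Finset.sum_filter, Fin.sum_univ_succ]
    simp [EuclideanSpace.norm_eq]
  have hN : √(n + 1 : ℕ) ≠ 0 := by positivity
  simp only [Function.comp_apply, hnorm]
  simp only [Matrix.mulVec, dotProduct, Matrix.transpose_apply, Fin.zero_eta, Fin.sum_univ_succ,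
    if_true, Fin.succ_ne_zero, if_false, hU.apply_zero, PiLp.inner_apply, Real.inner_apply]
  rw [mul_left_comm, inv_mul_cancel₀ hN, mul_one, Finset.sum_div, Finset.mul_sum]
  refine congrArg _ (Finset.sum_congr rfl fun j _ => ?_)
  ring

lemma exists_map_apply_mcSpherical_eq_smul_withDensity {m ρ : ℝ} (hv : m ^ 2 < ρ) (hn : 2 ≤ n)
    (hU : GoodRotation (Nat.succ_pos n) U) (i : Fin (n + 1)) :
    ∃ c : ℝ≥0∞, (mcSpherical (Nat.succ_pos n) U m ρ).map (fun φ => φ i) =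
      c • volume.withDensity fun t =>
        ENNReal.ofReal (sphereWeight n ((t - m) / √(n * (ρ - m ^ 2)))) := by
  set u : EuclideanSpace ℝ (Fin n) := WithLp.toLp 2 fun j => U j.succ i with hu
  have hr : 0 < √(n * (ρ - m ^ 2)) := by
    have := sub_pos.2 hv
    positivity
  have hnorm : √((n + 1 : ℕ) * (ρ - m ^ 2)) * ‖u‖ = √(n * (ρ - m ^ 2)) := by
    rw [EuclideanSpace.norm_eq, ← Real.sqrt_mul (by positivity)]
    simp only [hu, Real.norm_eq_abs, sq_abs, hU.sum_apply_succ_sq]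
    congr 1
    field_simp
  have hu0 : ‖u‖ ≠ 0 := right_ne_zero_of_mul (hnorm ▸ hr.ne')
  obtain ⟨c, hc⟩ := exists_map_inner_div_norm_stdGaussian (e := ‖u‖⁻¹ • u)
    (by rw [norm_smul, norm_inv, norm_norm, inv_mul_cancel₀ hu0]) (by simpa using hn)
  rw [finrank_euclideanSpace_fin] at hc
  have hcomp : (fun y => m + √((n + 1 : ℕ) * (ρ - m ^ 2)) * (⟪u, y⟫ / ‖y‖)) =
      (fun t => m + √(n * (ρ - m ^ 2)) * t) ∘ fun y => ⟪‖u‖⁻¹ • u, y⟫ / ‖y‖ := by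
    funext y
    rw [Function.comp_apply, ← hnorm, real_inner_smul_left]
    field_simp
  refine ⟨c * ENNReal.ofReal (√(n * (ρ - m ^ 2)))⁻¹, ?_⟩
  rw [map_apply_mcSpherical hU, hcomp, ← Measure.map_map (by fun_prop) (by fun_prop), hc,
    Measure.map_smul, map_const_add_mul_withDensity (by fun_prop) m hr, smul_smul]

lemma isProbabilityMeasure_map_apply_mcSpherical (hU : GoodRotation (Nat.succ_pos n) U)
    (i : Fin (n + 1)) (m ρ : ℝ) :
    IsProbabilityMeasure ((mcSpherical (Nat.succ_pos n) U m ρ).map fun φ => φ i) := by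
  rw [map_apply_mcSpherical hU]
  exact Measure.isProbabilityMeasure_map (by fun_prop)

lemma integral_apply_mcSpherical {F : Type*} [NormedAddCommGroup F] [NormedSpace ℝ F] {m ρ : ℝ}
    (hv : m ^ 2 < ρ) (hn : 2 ≤ n) (hU : GoodRotation (Nat.succ_pos n) U) (i : Fin (n + 1))
    {f : ℝ → F} (hf : AEStronglyMeasurable f) :
    ∫ φ, f (φ i) ∂mcSpherical (Nat.succ_pos n) U m ρ =
      (∫ t, sphereWeight n ((t - m) / √(n * (ρ - m ^ 2))))⁻¹ •
        ∫ t, sphereWeight n ((t - m) / √(n * (ρ - m ^ 2))) • f t := by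
  obtain ⟨c, hc⟩ := exists_map_apply_mcSpherical_eq_smul_withDensity hv hn hU i
  have := isProbabilityMeasure_map_apply_mcSpherical hU i m ρ
  have hac : (mcSpherical (Nat.succ_pos n) U m ρ).map (fun φ => φ i) ≪ volume :=
    hc ▸ (withDensity_absolutelyContinuous _ _).smul_left c
  rw [← integral_map (measurable_pi_apply i).aemeasurable (hf.mono_ac hac)]
  exact integral_eq_inv_smul_of_eq_smul_withDensity (by fun_prop)
    (fun t => sphereWeight_nonneg _ _) hc f

end McSpherical

section Limit

lemma tendsto_sphereWeight_div_sqrt (t : ℝ) :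
    Tendsto (fun d => sphereWeight d (t / √d)) atTop (𝓝 (Real.exp (-t ^ 2 / 2))) := by
  have hbase : Tendsto (fun d : ℝ => 1 + -t ^ 2 / d) atTop (𝓝 1) := by
    simpa using (tendsto_const_nhds.div_atTop tendsto_id).const_add (1 : ℝ)
  have hlim : Tendsto (fun d : ℝ => ((1 + -t ^ 2 / d) ^ d) ^ (1 / 2 : ℝ) *
      (1 + -t ^ 2 / d) ^ (-(3 / 2) : ℝ)) atTop (𝓝 (Real.exp (-t ^ 2 / 2))) := by
    have := ((Real.tendsto_one_add_div_rpow_exp (-t ^ 2)).rpow_const (p := 1 / 2)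
      (.inr (by norm_num))).mul (hbase.rpow_const (p := -(3 / 2)) (.inl one_ne_zero))
    rwa [Real.one_rpow, mul_one, ← Real.exp_mul, mul_one_div] at this
  refine hlim.congr' ?_
  filter_upwards [eventually_gt_atTop (t ^ 2)] with d hd
  have hd0 : 0 < d := (sq_nonneg t).trans_lt hd
  have hsq : (t / √d) ^ 2 = t ^ 2 / d := by rw [div_pow, Real.sq_sqrt hd0.le]
  have hlt : t ^ 2 / d < 1 := (div_lt_one hd0).2 hd
  have hpos : 0 < 1 + -t ^ 2 / d := by
    rw [neg_div]
    linarith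
  rw [sphereWeight_of_sq_lt_one (hsq ▸ hlt), hsq, ← Real.rpow_mul hpos.le, ← Real.rpow_add hpos]
  ring_nf

lemma eventually_sphereWeight_div_sqrt_le_exp {b : ℝ} (hb : b < 1 / 2) :
    ∀ᶠ d in atTop, ∀ t, sphereWeight d (t / √d) ≤ Real.exp (-(b * t ^ 2)) := by
  have hlim : Tendsto (fun d : ℝ => 1 / 2 - 3 / 2 / d) atTop (𝓝 (1 / 2)) := by
    simpa using (tendsto_const_nhds.div_atTop tendsto_id).const_sub (1 / 2 : ℝ)
  filter_upwards [eventually_ge_atTop 3, hlim.eventually_const_le hb] with d hd hbd t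
  refine (sphereWeight_le_exp hd _).trans (Real.exp_le_exp.2 (neg_le_neg ?_))
  rw [div_pow, Real.sq_sqrt (by linarith)]
  calc b * t ^ 2 ≤ (1 / 2 - 3 / 2 / d) * t ^ 2 := by gcongr
    _ = (d - 3) / 2 * (t ^ 2 / d) := by field_simp

lemma exp_neg_mul_sub_sq_le {a b : ℝ} (hab : a < b) (m t : ℝ) :
    Real.exp (-(b * (t - m) ^ 2)) ≤
      Real.exp (a * b * m ^ 2 / (b - a)) * Real.exp (-a * t ^ 2) := by
  have hpos : 0 < b - a := sub_pos.2 hab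
  have hsquare : a * b * m ^ 2 / (b - a) + -a * t ^ 2 =
      -(b * (t - m) ^ 2) + ((b - a) * t - b * m) ^ 2 / (b - a) := by
    field_simp
    ring
  rw [← Real.exp_add, hsquare, Real.exp_le_exp, le_add_iff_nonneg_right]
  positivity

lemma tendsto_integral_sphereWeight_smul {F : Type*} [NormedAddCommGroup F] [NormedSpace ℝ F]
    {m v a : ℝ} (hv : 0 < v) (ha : a < 1 / (2 * v)) {f : ℝ → F} (hf : AEStronglyMeasurable f)
    (hfint : Integrable fun t => ‖f t‖ * Real.exp (-a * t ^ 2)) :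
    Tendsto (fun d => ∫ t, sphereWeight d ((t - m) / √(d * v)) • f t) atTop
      (𝓝 (∫ t, Real.exp (-(t - m) ^ 2 / (2 * v)) • f t)) := by
  obtain ⟨b, hab, hb⟩ := exists_between ha
  have hbv : b * v < 1 / 2 := by
    rw [lt_div_iff₀ (by positivity)] at hb ⊢
    linarith
  have harg (d t : ℝ) : (t - m) / √(d * v) = (t - m) / √v / √d := by
    rw [Real.sqrt_mul' _ hv.le, mul_comm, div_div]
  have hsq (t : ℝ) : ((t - m) / √v) ^ 2 = (t - m) ^ 2 / v := by rw [div_pow, Real.sq_sqrt hv.le]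
  refine tendsto_integral_filter_of_dominated_convergence
    (fun t => Real.exp (a * b * m ^ 2 / (b - a)) * (‖f t‖ * Real.exp (-a * t ^ 2)))
    (.of_forall fun d => ?_) ?_ (hfint.const_mul _) (ae_of_all _ fun t => ?_)
  · have hweight : Measurable fun t => sphereWeight d ((t - m) / √(d * v)) := by fun_prop
    exact hweight.aestronglyMeasurable.smul hf
  · filter_upwards [eventually_sphereWeight_div_sqrt_le_exp hbv] with d hd
    refine ae_of_all _ fun t => ?_
    rw [norm_smul, Real.norm_of_nonneg (sphereWeight_nonneg _ _), mul_comm ‖f t‖, ← mul_assoc]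
    gcongr
    calc sphereWeight d ((t - m) / √(d * v))
        ≤ Real.exp (-(b * v * ((t - m) / √v) ^ 2)) := harg d t ▸ hd _
      _ = Real.exp (-(b * (t - m) ^ 2)) := by
          rw [hsq]
          field_simp
      _ ≤ _ := exp_neg_mul_sub_sq_le hab m t
  · have hweight := tendsto_sphereWeight_div_sqrt ((t - m) / √v)
    rw [neg_div, hsq, div_div, mul_comm v, ← neg_div] at hweight
    simp only [harg]
    exact hweight.smul_const _

lemma integral_exp_neg_sub_sq_div (m v : ℝ) :
    ∫ t : ℝ, Real.exp (-(t - m) ^ 2 / (2 * v)) = √(2 * Real.pi * v) := by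
  rw [integral_sub_right_eq_self (fun t : ℝ => Real.exp (-t ^ 2 / (2 * v))) m]
  simp_rw [neg_div, div_eq_inv_mul, ← neg_mul]
  rw [integral_gaussian, div_inv_eq_mul]
  ring_nf

end Limit

theorem stmt18_general {F : Type*} [NormedAddCommGroup F] [NormedSpace ℝ F] [CompleteSpace F]
    {ρ m a : ℝ} (hm : m ^ 2 < ρ) (i : (N : ℕ) → Fin (N + 1))
    {U : (N : ℕ) → Matrix (Fin N) (Fin N) ℝ}
    (hU : ∀ N : ℕ, GoodRotation (Nat.succ_pos N) (U (N + 1))) (ha : a < 1 / (2 * (ρ - m ^ 2)))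
    {f : ℝ → F} (hf : AEStronglyMeasurable f)
    (hfint : Integrable fun t => ‖f t‖ * Real.exp (-a * t ^ 2)) :
    Tendsto (fun N => ∫ φ, f (φ (i N)) ∂mcSpherical (Nat.succ_pos N) (U (N + 1)) m ρ) atTop
      (𝓝 ((√(2 * Real.pi * (ρ - m ^ 2)))⁻¹ •
        ∫ t, Real.exp (-(t - m) ^ 2 / (2 * (ρ - m ^ 2))) • f t)) ∧
    ∃ C, ∀ N, ‖∫ φ, f (φ (i N)) ∂mcSpherical (Nat.succ_pos N) (U (N + 1)) m ρ‖ ≤ C := by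
  have hv : 0 < ρ - m ^ 2 := sub_pos.2 hm
  have hnum := tendsto_integral_sphereWeight_smul (m := m) hv ha hf hfint
  have hden := tendsto_integral_sphereWeight_smul (m := m) (a := 1 / (4 * (ρ - m ^ 2))) hv
    (by gcongr; norm_num) (f := fun _ => (1 : ℝ)) aestronglyMeasurable_const
    (by simpa using integrable_exp_neg_mul_sq (by positivity))
  simp only [smul_eq_mul, mul_one, integral_exp_neg_sub_sq_div] at hden
  have hratio := ((hden.inv₀ (by positivity)).smul hnum).comp tendsto_natCast_atTop_atTop
  have hmarginal := (eventually_ge_atTop 2).mono fun N hN =>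
    (integral_apply_mcSpherical hm hN (hU N) (i N) hf).symm
  have hlim := hratio.congr' hmarginal
  exact ⟨hlim, hlim.norm.bddAbove_range.imp fun C hC N => hC (Set.mem_range_self N)⟩

theorem stmt18 (ρ m : ℝ) (hρ : 0 < ρ)
    (hm : m ∈ Set.Ioo (-Real.sqrt ρ) (Real.sqrt ρ))
    -- the fixed coordinate `x` (realized in the lattice `Fin (N+1)` as soon as `x < N+1`)
    (x : ℕ)
    -- a choice of rotation matrix for every system size
    (U : (N : ℕ) → Matrix (Fin N) (Fin N) ℝ)
    (hU : ∀ N : ℕ, GoodRotation (Nat.succ_pos N) (U (N + 1)))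
    (f : ℝ → ℝ) (hf : Measurable f)
    -- `f` is integrable with respect to every Gaussian measure
    (hfint : ∀ a : ℝ, 0 < a →
      MeasureTheory.Integrable (fun t : ℝ => |f t| * Real.exp (-a * t ^ 2))) :
    -- the single-coordinate expectations converge to the Gaussian expectation
    Filter.Tendsto
      (fun N : ℕ => ∫ φ, f (φ ⟨x % (N + 1), Nat.mod_lt x (Nat.succ_pos N)⟩)
        ∂(mcSpherical (Nat.succ_pos N) (U (N + 1)) m ρ))
      Filter.atTop
      (nhds ((Real.sqrt (2 * Real.pi * (ρ - m ^ 2)))⁻¹ *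
        ∫ t : ℝ, f t * Real.exp (-(t - m) ^ 2 / (2 * (ρ - m ^ 2))))) ∧
    -- in particular, the sequence of expectations is bounded uniformly in `N`
    ∃ C : ℝ, ∀ N : ℕ,
      |∫ φ, f (φ ⟨x % (N + 1), Nat.mod_lt x (Nat.succ_pos N)⟩)
        ∂(mcSpherical (Nat.succ_pos N) (U (N + 1)) m ρ)| ≤ C := by
  have hv : m ^ 2 < ρ := Real.sq_lt.2 hm
  obtain ⟨a, ha0, ha⟩ := exists_between (one_div_pos.2 (mul_pos two_pos (sub_pos.2 hv)))
  simpa only [smul_eq_mul, mul_comm (Real.exp _) (f _), Real.norm_eq_abs] using stmt18_general hv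
    (fun N => ⟨x % (N + 1), Nat.mod_lt x N.succ_pos⟩) hU ha hf.aestronglyMeasurable (hfint a ha0)
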